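/- If D̂ is nonempty, then the maximum of the objective function F over D̂ equals (h*)²/2, where h* = √2 · (1 − T*). -/

import Mathlib

open Finset

noncomputable section

/-- Membership in the domain `D` of the optimization problem. -/
def memD (ℓ : ℕ) (a b x y : ℕ → ℝ) : Prop :=
  (∀ i ∈ Finset.Icc 1 ℓ, 0 < x i ∧ 0 < y i) ∧
  (∑ i ∈ Finset.Icc 1 ℓ, (x i + y i)) ≤ 1 ∧
  (∀ m ∈ Finset.Icc 1 ℓ,
    0 ≤ ∑ i ∈ Finset.Icc 1 m, (x i - (a i) ^ 2 / (2 * x i) - (b i) ^ 2 / (2 * y i)))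

/-- Membership in the domain `D̂`: elements of `D` where the cumulative condition holds with
equality for `m = ℓ`. -/
def memDhat (ℓ : ℕ) (a b x y : ℕ → ℝ) : Prop :=
  memD ℓ a b x y ∧
  (∑ i ∈ Finset.Icc 1 ℓ, (x i - (a i) ^ 2 / (2 * x i) - (b i) ^ 2 / (2 * y i))) = 0

/-- The convention `c_0 = c_ℓ = 0`. -/
def cbar (ℓ : ℕ) (c : ℕ → ℝ) (m : ℕ) : ℝ := if m = 0 ∨ m = ℓ then 0 else c m

/-- Membership in `D^m(c, c')`. -/
def memDm (a b : ℕ → ℝ) (N : ℝ) (m : ℕ) (c c' x y : ℝ) : Prop :=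
  0 < x ∧ 0 < y ∧ x + y ≤ N ∧ c + x - (a m) ^ 2 / (2 * x) - (b m) ^ 2 / (2 * y) = c'

/-- Membership in `D̃(c_1, …, c_{ℓ-1})`. -/
def memDtilde (ℓ : ℕ) (a b : ℕ → ℝ) (N : ℝ) (c x y : ℕ → ℝ) : Prop :=
  (∑ i ∈ Finset.Icc 1 ℓ, (x i + y i)) ≤ 1 ∧
  ∀ m ∈ Finset.Icc 1 ℓ, memDm a b N m (cbar ℓ c (m - 1)) (cbar ℓ c m) (x m) (y m)

/-- Membership in `D^c`. -/
def memDc (ℓ : ℕ) (a b : ℕ → ℝ) (N : ℝ) (c : ℕ → ℝ) : Prop :=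
  (∀ m ∈ Finset.Icc 1 (ℓ - 1), 0 ≤ c m) ∧ ∃ x y, memDtilde ℓ a b N c x y

/-- `(x, y)` minimizes `x + y` over `D^m(c, c')`. -/
def isArgminDm (a b : ℕ → ℝ) (N : ℝ) (m : ℕ) (c c' x y : ℝ) : Prop :=
  memDm a b N m c c' x y ∧ ∀ x' y' : ℝ, memDm a b N m c c' x' y' → x + y ≤ x' + y'

/-- The projection `D^m_x(c, C)` of `D^m(c, C)` to the first coordinate. -/
def Dmx (a b : ℕ → ℝ) (N : ℝ) (m : ℕ) (c C : ℝ) : Set ℝ :=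
  {x : ℝ | ∃ y : ℝ, memDm a b N m c C x y}

/-- The function `f(c̃) = sqrt((1 + c̃)/2 + sqrt(c̃²/4 + c̃))`. -/
def fval (c : ℝ) : ℝ := Real.sqrt ((1 + c) / 2 + Real.sqrt (c ^ 2 / 4 + c))

/-- `c̃ = (Σ b_i)² / (2 (Σ a_i)²)`. -/
def ctilde (ℓ : ℕ) (a b : ℕ → ℝ) : ℝ :=
  (∑ i ∈ Finset.Icc 1 ℓ, b i) ^ 2 / (2 * (∑ i ∈ Finset.Icc 1 ℓ, a i) ^ 2)

/-- The objective function `F` on `ℝ^{2ℓ}`. -/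
def Fobj (ℓ : ℕ) (a b x y : ℕ → ℝ) : ℝ :=
  (1 - ∑ i ∈ Finset.Icc 1 ℓ, (x i + y i)) *
  (1 - ∑ i ∈ Finset.Icc 1 ℓ, (y i + (a i) ^ 2 / (2 * x i) + (b i) ^ 2 / (2 * y i)))

/-- The late-expensive-obstacles assumption. -/
def LateExpensive (ℓ : ℕ) (a b : ℕ → ℝ) : Prop :=
  ∀ m, 1 ≤ m → m < ℓ →
    (∑ i ∈ Finset.Icc 1 m, b i) / (∑ i ∈ Finset.Icc 1 m, a i) <
      (∑ i ∈ Finset.Icc (m + 1) ℓ, b i) / (∑ i ∈ Finset.Icc (m + 1) ℓ, a i)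

/-- The ratio `(Σ_{j=p}^q b_j) / (Σ_{j=p}^q a_j)`. -/
def ratioBA (a b : ℕ → ℝ) (p q : ℕ) : ℝ :=
  (∑ j ∈ Finset.Icc p q, b j) / (∑ j ∈ Finset.Icc p q, a j)

/-- `u` (on indices `0, …, n+1`) is an admissible division into blocks. -/
def AdmissibleDiv (ℓ : ℕ) (a b : ℕ → ℝ) (n : ℕ) (u : ℕ → ℕ) : Prop :=
  u 0 = 0 ∧ u (n + 1) = ℓ ∧ (∀ i ≤ n, u i < u (i + 1)) ∧
  ∀ i ≤ n, ∀ m, u i < m → m < u (i + 1) →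
    ratioBA a b (u i + 1) m < ratioBA a b (m + 1) (u (i + 1))

/-- The canonical admissible division into blocks: the admissible division whose index
set is the intersection of the index sets of all admissible divisions into blocks. -/
def IsCanonicalDiv (ℓ : ℕ) (a b : ℕ → ℝ) (n : ℕ) (u : ℕ → ℕ) : Prop :=
  AdmissibleDiv ℓ a b n u ∧
  ∀ k, (∃ i ≤ n + 1, u i = k) ↔
    ∀ (n' : ℕ) (u' : ℕ → ℕ), AdmissibleDiv ℓ a b n' u' → ∃ i ≤ n' + 1, u' i = k

/-- The minimal time to cross one block with branching length `A` and obstacle length `B`. -/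
def blockTime (A B : ℝ) : ℝ :=
  A * fval (B ^ 2 / (2 * A ^ 2)) +
    B ^ 2 / (2 * A * (fval (B ^ 2 / (2 * A ^ 2)) - 1 / (2 * fval (B ^ 2 / (2 * A ^ 2)))))

/-- The total optimal time `T*` associated with a division into blocks. -/
def Tstar (a b : ℕ → ℝ) (n : ℕ) (u : ℕ → ℕ) : ℝ :=
  ∑ i ∈ Finset.range (n + 1),
    blockTime (∑ j ∈ Finset.Icc (u i + 1) (u (i + 1)), a j)
      (∑ j ∈ Finset.Icc (u i + 1) (u (i + 1)), b j)

/-- The coefficient appearing in the formula for the optimal `c_m`. -/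
def coefC (ℓ : ℕ) (a b : ℕ → ℝ) (m : ℕ) : ℝ :=
  ((∑ i ∈ Finset.Icc 1 m, a i) * (∑ i ∈ Finset.Icc (m + 1) ℓ, b i) -
    (∑ i ∈ Finset.Icc 1 m, b i) * (∑ i ∈ Finset.Icc (m + 1) ℓ, a i)) /
    (∑ i ∈ Finset.Icc 1 ℓ, b i)

/-!
On `D̂` the two factors of `F` agree, so `F = (1 - T) ^ 2` with `T = ∑ (x i + y i)`, and `T` has to
be minimized. For a block with ratio `r = B / A` there are rates `t`, `s` depending only on `r` such
that AM-GM bounds `x + y - 2 s² (x - a² / (2 x) - b² / (2 y))` from below, with equality at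
`x = a t`, `y = b s`; summed over the block, the bound becomes `blockTime A B`. Here `2 s²` is the
Lagrange multiplier of the constraint, and it increases with `r`. In the canonical division the
ratios do not increase from block to block, since otherwise two blocks could be merged and a cut
avoided. Hence the multipliers do not increase either, and summation by parts turns the cumulative
constraints of `D` into `T* ≤ T`. Conversely, the point `x = a t`, `y = b s` meets the constraints
with equality at every cut, and admissibility makes them hold inside each block.
-/

/-! ### The optimal rates of a block -/

section Rates

variable {c r : ℝ}

lemma fval_pos (hc : 0 ≤ c) : 0 < fval c :=
  Real.sqrt_pos.2 (by positivity)

lemma fval_sq (hc : 0 ≤ c) : fval c ^ 2 = (1 + c) / 2 + √(c ^ 2 / 4 + c) :=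
  Real.sq_sqrt (by positivity)

lemma monotoneOn_fval : MonotoneOn fval (Set.Ici 0) := by
  intro c (hc : 0 ≤ c) d _ hcd
  unfold fval
  gcongr

/-- The ratio `x / a` at the optimal crossing of a block with ratio `r = B / A`. -/
def branchRate (r : ℝ) : ℝ := fval (r ^ 2 / 2)

/-- The ratio `y / b` at the optimal crossing of a block with ratio `r = B / A`. For `r > 0` it
equals `r / (2 (t - 1 / (2 t)))` with `t = branchRate r`, so that `B * obstacleRate r` is the second
summand of `blockTime A B`; the form chosen here makes its dependence on `t` monotone at sight. -/
def obstacleRate (r : ℝ) : ℝ := branchRate r / √(2 * branchRate r ^ 2 + 1)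

/-- The contribution of one obstacle to the cumulative constraints defining `D`. -/
def netGain (a b x y : ℝ) : ℝ := x - a ^ 2 / (2 * x) - b ^ 2 / (2 * y)

lemma branchRate_pos (r : ℝ) : 0 < branchRate r := fval_pos (by positivity)

lemma obstacleRate_pos (r : ℝ) : 0 < obstacleRate r := by
  have := branchRate_pos r
  unfold obstacleRate
  positivity

lemma one_le_two_mul_branchRate_sq (r : ℝ) : 1 ≤ 2 * branchRate r ^ 2 := by
  rw [branchRate, fval_sq (by positivity)]
  linarith [sq_nonneg r, Real.sqrt_nonneg ((r ^ 2 / 2) ^ 2 / 4 + r ^ 2 / 2)]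

lemma two_mul_branchRate_sq_sub_one (hr : 0 ≤ r) :
    2 * branchRate r ^ 2 - 1 = r * √(2 * branchRate r ^ 2 + 1) := by
  have h_root : √((r ^ 2 / 2) ^ 2 / 4 + r ^ 2 / 2) ^ 2 = (r ^ 2 / 2) ^ 2 / 4 + r ^ 2 / 2 :=
    Real.sq_sqrt (by positivity)
  have h_sq : (2 * branchRate r ^ 2 - 1) ^ 2 = r ^ 2 * (2 * branchRate r ^ 2 + 1) := by
    rw [branchRate, fval_sq (by positivity)]
    linear_combination 4 * h_root
  rw [← Real.sqrt_sq (sub_nonneg.2 (one_le_two_mul_branchRate_sq r)), h_sq,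
    Real.sqrt_mul (sq_nonneg r), Real.sqrt_sq hr]

lemma branchRate_sub_one_div_two_mul_branchRate (hr : 0 ≤ r) :
    branchRate r - 1 / (2 * branchRate r) = r / (2 * obstacleRate r) := by
  have ht := branchRate_pos r
  calc branchRate r - 1 / (2 * branchRate r)
      = (2 * branchRate r ^ 2 - 1) / (2 * branchRate r) := by field_simp
    _ = r * √(2 * branchRate r ^ 2 + 1) / (2 * branchRate r) := by
        rw [two_mul_branchRate_sq_sub_one hr]
    _ = r / (2 * obstacleRate r) := by
        unfold obstacleRate
        field_simp

lemma obstacleRate_sq (r : ℝ) :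
    obstacleRate r ^ 2 = branchRate r ^ 2 / (2 * branchRate r ^ 2 + 1) := by
  rw [obstacleRate, div_pow, Real.sq_sqrt (by positivity)]

lemma two_mul_obstacleRate_sq (r : ℝ) :
    2 * obstacleRate r ^ 2 = 1 - 1 / (2 * branchRate r ^ 2 + 1) := by
  rw [obstacleRate_sq]
  field_simp
  ring

lemma branchRate_sub_mul_obstacleRate (hr : 0 ≤ r) :
    branchRate r - r * obstacleRate r = 2 * branchRate r / (2 * branchRate r ^ 2 + 1) := by
  have ht := branchRate_pos r
  have hs := obstacleRate_pos r
  have h_mul : r * obstacleRate r =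
      (branchRate r - 1 / (2 * branchRate r)) * (2 * obstacleRate r ^ 2) := by
    rw [branchRate_sub_one_div_two_mul_branchRate hr]
    field_simp
  rw [h_mul, two_mul_obstacleRate_sq]
  field_simp
  ring

lemma monotoneOn_branchRate : MonotoneOn branchRate (Set.Ici 0) := by
  intro r (hr : 0 ≤ r) r' _ hrr'
  have h_sq : r ^ 2 / 2 ≤ r' ^ 2 / 2 := by gcongr
  exact monotoneOn_fval (Set.mem_Ici.2 (by positivity)) (Set.mem_Ici.2 (by positivity)) h_sq

lemma monotoneOn_two_mul_obstacleRate_sq :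
    MonotoneOn (fun r => 2 * obstacleRate r ^ 2) (Set.Ici 0) := by
  intro r hr r' hr' hrr'
  have h_rate := monotoneOn_branchRate hr hr' hrr'
  have ht := branchRate_pos r
  simp only [two_mul_obstacleRate_sq]
  gcongr

lemma blockTime_eq {A B : ℝ} (hA : 0 < A) (hB : 0 ≤ B) :
    blockTime A B = A * branchRate (B / A) + B * obstacleRate (B / A) := by
  have h_arg : B ^ 2 / (2 * A ^ 2) = (B / A) ^ 2 / 2 := by ring
  have h_stat := branchRate_sub_one_div_two_mul_branchRate (div_nonneg hB hA.le)
  rw [blockTime, h_arg, ← branchRate, h_stat]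
  field_simp

end Rates

/-! ### The Lagrangian bound for a block -/

section Lagrangian

lemma two_mul_le_add_sq_div (p : ℝ) {x : ℝ} (hx : 0 < x) : 2 * p ≤ x + p ^ 2 / x := by
  have h_gap : x + p ^ 2 / x - 2 * p = (x - p) ^ 2 / x := by
    field_simp
    ring
  have : 0 ≤ (x - p) ^ 2 / x := by positivity
  linarith

lemma netGain_mul_rates (a b : ℝ) {r : ℝ} (hr : 0 ≤ r) :
    netGain a b (a * branchRate r) (b * obstacleRate r) = (a * r - b) / (2 * obstacleRate r) := by
  have ht := branchRate_pos r
  calc netGain a b (a * branchRate r) (b * obstacleRate r)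
      = a * (branchRate r - 1 / (2 * branchRate r)) - b / (2 * obstacleRate r) := by
        unfold netGain
        field_simp
    _ = (a * r - b) / (2 * obstacleRate r) := by
        rw [branchRate_sub_one_div_two_mul_branchRate hr]
        ring

lemma add_multiplier_mul_netGain_le (a b : ℝ) {x y r : ℝ} (hx : 0 < x) (hy : 0 < y)
    (hr : 0 ≤ r) :
    a * (branchRate r - r * obstacleRate r) + b * (2 * obstacleRate r) +
      2 * obstacleRate r ^ 2 * netGain a b x y ≤ x + y := by
  have h_branch := two_mul_le_add_sq_div (a * branchRate r) hx
  have h_obstacle := two_mul_le_add_sq_div (b * obstacleRate r) hy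
  have h_lagrangian : x + y - 2 * obstacleRate r ^ 2 * netGain a b x y =
      (x + (a * branchRate r) ^ 2 / x) / (2 * branchRate r ^ 2 + 1) +
        (y + (b * obstacleRate r) ^ 2 / y) := by
    rw [netGain, mul_pow b, obstacleRate_sq]
    field_simp
    ring
  have h_scaled : 2 * (a * branchRate r) / (2 * branchRate r ^ 2 + 1) ≤
      (x + (a * branchRate r) ^ 2 / x) / (2 * branchRate r ^ 2 + 1) := by gcongr
  rw [branchRate_sub_mul_obstacleRate hr, ← mul_div_assoc, mul_left_comm]
  linarith

variable {ι : Type*}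

lemma sum_netGain_mul_rates (I : Finset ι) (a b : ι → ℝ) {r : ℝ} (hr : 0 ≤ r) :
    ∑ i ∈ I, netGain (a i) (b i) (a i * branchRate r) (b i * obstacleRate r) =
      ((∑ i ∈ I, a i) * r - ∑ i ∈ I, b i) / (2 * obstacleRate r) := by
  rw [sum_mul, ← sum_sub_distrib, sum_div]
  exact sum_congr rfl fun i _ => netGain_mul_rates (a i) (b i) hr

lemma blockTime_add_multiplier_mul_sum_netGain_le {I : Finset ι} {a b x y : ι → ℝ}
    (hA : 0 < ∑ i ∈ I, a i) (hB : 0 ≤ ∑ i ∈ I, b i) (hx : ∀ i ∈ I, 0 < x i)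
    (hy : ∀ i ∈ I, 0 < y i) :
    blockTime (∑ i ∈ I, a i) (∑ i ∈ I, b i) +
        2 * obstacleRate ((∑ i ∈ I, b i) / ∑ i ∈ I, a i) ^ 2 *
          ∑ i ∈ I, netGain (a i) (b i) (x i) (y i) ≤
      ∑ i ∈ I, (x i + y i) := by
  have h_sum := sum_le_sum fun i hi =>
    add_multiplier_mul_netGain_le (a i) (b i) (hx i hi) (hy i hi) (div_nonneg hB hA.le)
  rw [sum_add_distrib, sum_add_distrib, ← sum_mul, ← sum_mul, ← mul_sum] at h_sum
  refine le_of_eq_of_le ?_ h_sum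
  rw [blockTime_eq hA hB]
  field_simp
  ring

end Lagrangian

/-! ### Sums over consecutive intervals -/

lemma sum_Icc_add_one_consecutive {M : Type*} [AddCommMonoid M] (f : ℕ → M) {p m q : ℕ}
    (hpm : p ≤ m) (hmq : m ≤ q) :
    ∑ j ∈ Icc (p + 1) m, f j + ∑ j ∈ Icc (m + 1) q, f j = ∑ j ∈ Icc (p + 1) q, f j := by
  simp only [Icc_add_one_left_eq_Ioc]
  exact sum_Ioc_consecutive f hpm hmq

lemma sum_range_sum_Icc_add_one {M : Type*} [AddCommMonoid M] (f : ℕ → M) {u : ℕ → ℕ} {k : ℕ}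
    (hu : MonotoneOn u (Set.Iic k)) :
    ∑ i ∈ range k, ∑ j ∈ Icc (u i + 1) (u (i + 1)), f j = ∑ j ∈ Icc (u 0 + 1) (u k), f j := by
  induction k with
  | zero => simp
  | succ k ih =>
    have h_first : u 0 ≤ u k := hu (by simp) (by simp) k.zero_le
    have h_last : u k ≤ u (k + 1) := hu (by simp) (by simp) k.le_succ
    rw [sum_range_succ, ih (hu.mono (Set.Iic_subset_Iic.2 k.le_succ)),
      sum_Icc_add_one_consecutive f h_first h_last]

lemma mul_sum_range_le_sum_range_mul {R : Type*} [CommRing R] [LinearOrder R]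
    [IsStrictOrderedRing R] {n : ℕ} {μ g : ℕ → R} (hμ : ∀ i < n, μ (i + 1) ≤ μ i)
    (hg : ∀ k ≤ n, 0 ≤ ∑ i ∈ range k, g i) :
    μ n * ∑ i ∈ range (n + 1), g i ≤ ∑ i ∈ range (n + 1), μ i * g i := by
  have h_parts := sum_range_by_parts μ g (n + 1)
  simp only [smul_eq_mul, Nat.add_sub_cancel] at h_parts
  have h_step : ∑ i ∈ range n, (μ (i + 1) - μ i) * ∑ j ∈ range (i + 1), g j ≤ 0 :=
    sum_nonpos fun i hi =>
      have hin := mem_range.1 hi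
      mul_nonpos_of_nonpos_of_nonneg (sub_nonpos.2 (hμ i hin)) (hg (i + 1) hin)
  linarith

/-! ### Ratios and merging of blocks -/

section Ratio

variable {ℓ : ℕ} {a b : ℕ → ℝ}

lemma forall_mem_Icc_add_one {P : ℕ → Prop} (h : ∀ i ∈ Icc 1 ℓ, P i) (p : ℕ) {q : ℕ}
    (hq : q ≤ ℓ) : ∀ i ∈ Icc (p + 1) q, P i :=
  fun i hi => h i (Icc_subset_Icc (by omega) hq hi)

lemma sum_Icc_add_one_pos (ha : ∀ i ∈ Icc 1 ℓ, 0 < a i) {p q : ℕ} (hpq : p < q) (hq : q ≤ ℓ) :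
    0 < ∑ i ∈ Icc (p + 1) q, a i :=
  sum_pos (forall_mem_Icc_add_one ha p hq) (nonempty_Icc.2 hpq)

lemma lt_ratioBA_of_le_of_lt (ha : ∀ i ∈ Icc 1 ℓ, 0 < a i) {p m q : ℕ} {r : ℝ} (hpm : p < m)
    (hmq : m < q) (hq : q ≤ ℓ) (hl : r ≤ ratioBA a b (p + 1) m)
    (hr : r < ratioBA a b (m + 1) q) : r < ratioBA a b (p + 1) q := by
  rw [ratioBA, le_div_iff₀ (sum_Icc_add_one_pos ha hpm (by omega))] at hl
  rw [ratioBA, lt_div_iff₀ (sum_Icc_add_one_pos ha hmq hq)] at hr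
  rw [ratioBA, lt_div_iff₀ (sum_Icc_add_one_pos ha (by omega) hq),
    ← sum_Icc_add_one_consecutive a hpm.le hmq.le, ← sum_Icc_add_one_consecutive b hpm.le hmq.le]
  linarith

lemma ratioBA_lt_of_lt_of_le (ha : ∀ i ∈ Icc 1 ℓ, 0 < a i) {p m q : ℕ} {r : ℝ} (hpm : p < m)
    (hmq : m < q) (hq : q ≤ ℓ) (hl : ratioBA a b (p + 1) m < r)
    (hr : ratioBA a b (m + 1) q ≤ r) : ratioBA a b (p + 1) q < r := by
  rw [ratioBA, div_lt_iff₀ (sum_Icc_add_one_pos ha hpm (by omega))] at hl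
  rw [ratioBA, div_le_iff₀ (sum_Icc_add_one_pos ha hmq hq)] at hr
  rw [ratioBA, div_lt_iff₀ (sum_Icc_add_one_pos ha (by omega) hq),
    ← sum_Icc_add_one_consecutive a hpm.le hmq.le, ← sum_Icc_add_one_consecutive b hpm.le hmq.le]
  linarith

/-- The admissibility condition for the single block of obstacles `p + 1, …, q`: each proper
initial segment has a smaller ratio than the rest of the block. -/
def IsAdmissibleBlock (a b : ℕ → ℝ) (p q : ℕ) : Prop :=
  ∀ m, p < m → m < q → ratioBA a b (p + 1) m < ratioBA a b (m + 1) q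

lemma IsAdmissibleBlock.ratioBA_le {p m q : ℕ} (h : IsAdmissibleBlock a b p q)
    (ha : ∀ i ∈ Icc 1 ℓ, 0 < a i) (hpm : p < m) (hmq : m ≤ q) (hq : q ≤ ℓ) :
    ratioBA a b (p + 1) m ≤ ratioBA a b (p + 1) q := by
  rcases hmq.eq_or_lt with rfl | hmq
  · rfl
  · exact (lt_ratioBA_of_le_of_lt ha hpm hmq hq le_rfl (h m hpm hmq)).le

lemma IsAdmissibleBlock.merge {p q r : ℕ} (h₁ : IsAdmissibleBlock a b p q)
    (h₂ : IsAdmissibleBlock a b q r) (ha : ∀ i ∈ Icc 1 ℓ, 0 < a i) (hpq : p < q) (hqr : q < r)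
    (hr : r ≤ ℓ) (hlt : ratioBA a b (p + 1) q < ratioBA a b (q + 1) r) :
    IsAdmissibleBlock a b p r := by
  intro m hpm hmr
  rcases lt_trichotomy m q with hmq | rfl | hqm
  · have h_head : ratioBA a b (p + 1) m < ratioBA a b (p + 1) q :=
      lt_ratioBA_of_le_of_lt ha hpm hmq (by omega) le_rfl (h₁ m hpm hmq)
    exact lt_ratioBA_of_le_of_lt ha hmq hqr hr (h₁ m hpm hmq).le (h_head.trans hlt)
  · exact hlt
  · have h_tail : ratioBA a b (q + 1) r < ratioBA a b (m + 1) r :=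
      ratioBA_lt_of_lt_of_le ha hqm hmr hr (h₂ m hqm hmr) le_rfl
    exact ratioBA_lt_of_lt_of_le ha hpq hqm (by omega) (hlt.trans h_tail) (h₂ m hqm hmr).le

end Ratio

/-! ### The canonical division -/

section Division

variable {ℓ n : ℕ} {a b : ℕ → ℝ} {u : ℕ → ℕ}

/-- The ratio `B_i / A_i` of the `i`-th block of the division `u`. -/
def blockRatio (a b : ℕ → ℝ) (u : ℕ → ℕ) (i : ℕ) : ℝ := ratioBA a b (u i + 1) (u (i + 1))

/-- The sequence of cuts `u` with its `i`-th term left out, which merges two neighbouring blocks. -/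
def dropCut (i : ℕ) (u : ℕ → ℕ) (k : ℕ) : ℕ := if k < i then u k else u (k + 1)

lemma dropCut_of_lt (u : ℕ → ℕ) {i k : ℕ} (hki : k < i) : dropCut i u k = u k :=
  if_pos hki

lemma dropCut_of_le (u : ℕ → ℕ) {i k : ℕ} (hik : i ≤ k) : dropCut i u k = u (k + 1) :=
  if_neg hik.not_gt

lemma dropCut_ne (hu : Set.InjOn u (Set.Iic (n + 1))) {i k : ℕ} (hi : i ≤ n + 1) (hk : k ≤ n) :
    dropCut i u k ≠ u i := by
  rcases lt_or_ge k i with hki | hik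
  · rw [dropCut_of_lt u hki, hu.ne_iff (Set.mem_Iic.2 (by omega)) hi]
    exact hki.ne
  · rw [dropCut_of_le u hik, hu.ne_iff (Set.mem_Iic.2 (by omega)) hi]
    omega

namespace AdmissibleDiv

lemma strictMonoOn (h : AdmissibleDiv ℓ a b n u) : StrictMonoOn u (Set.Iic (n + 1)) :=
  strictMonoOn_Iic_of_lt_succ fun i hi => h.2.2.1 i (Nat.lt_succ_iff.1 hi)

lemma le_length (h : AdmissibleDiv ℓ a b n u) {k : ℕ} (hk : k ≤ n + 1) : u k ≤ ℓ :=
  h.2.1 ▸ h.strictMonoOn.monotoneOn hk Set.self_mem_Iic hk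

lemma sum_blocks (h : AdmissibleDiv ℓ a b n u) (f : ℕ → ℝ) {k : ℕ} (hk : k ≤ n + 1) :
    ∑ i ∈ range k, ∑ j ∈ Icc (u i + 1) (u (i + 1)), f j = ∑ j ∈ Icc 1 (u k), f j := by
  rw [sum_range_sum_Icc_add_one f (h.strictMonoOn.monotoneOn.mono (Set.Iic_subset_Iic.2 hk)), h.1]

lemma sum_block_pos (h : AdmissibleDiv ℓ a b n u) {f : ℕ → ℝ} (hf : ∀ i ∈ Icc 1 ℓ, 0 < f i)
    {i : ℕ} (hi : i ≤ n) : 0 < ∑ j ∈ Icc (u i + 1) (u (i + 1)), f j :=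
  sum_Icc_add_one_pos hf (h.2.2.1 i hi) (h.le_length (Nat.succ_le_succ hi))

lemma blockRatio_pos (h : AdmissibleDiv ℓ a b n u) (ha : ∀ i ∈ Icc 1 ℓ, 0 < a i)
    (hb : ∀ i ∈ Icc 1 ℓ, 0 < b i) {i : ℕ} (hi : i ≤ n) : 0 < blockRatio a b u i :=
  div_pos (h.sum_block_pos hb hi) (h.sum_block_pos ha hi)

lemma merge (h : AdmissibleDiv ℓ a b (n + 1) u) (ha : ∀ i ∈ Icc 1 ℓ, 0 < a i) {i : ℕ}
    (hi : i ≤ n) (hlt : blockRatio a b u i < blockRatio a b u (i + 1)) :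
    AdmissibleDiv ℓ a b n (dropCut (i + 1) u) := by
  have h_le : u (i + 2) ≤ ℓ := h.le_length (by omega)
  obtain ⟨h_zero, h_last, h_lt, h_adm⟩ := h
  have h_block : ∀ k ≤ n, dropCut (i + 1) u k < dropCut (i + 1) u (k + 1) ∧
      IsAdmissibleBlock a b (dropCut (i + 1) u k) (dropCut (i + 1) u (k + 1)) := by
    intro k hk
    have h_left := h_lt k (by omega)
    have h_right := h_lt (k + 1) (by omega)
    rcases lt_trichotomy k i with hki | rfl | hik
    · rw [dropCut_of_lt u (by omega), dropCut_of_lt u (by omega)]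
      exact ⟨h_left, h_adm k (by omega)⟩
    · rw [dropCut_of_lt u (by omega), dropCut_of_le u (by omega)]
      exact ⟨h_left.trans h_right,
        .merge (h_adm k (by omega)) (h_adm (k + 1) (by omega)) ha h_left h_right h_le hlt⟩
    · rw [dropCut_of_le u (by omega), dropCut_of_le u (by omega)]
      exact ⟨h_right, h_adm (k + 1) (by omega)⟩
  exact ⟨(dropCut_of_lt u i.succ_pos).trans h_zero, (dropCut_of_le u (by omega)).trans h_last,
    fun k hk => (h_block k hk).1, fun k hk => (h_block k hk).2⟩

lemma Tstar_add_sum_multiplier_mul_netGain_le (h : AdmissibleDiv ℓ a b n u)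
    (ha : ∀ i ∈ Icc 1 ℓ, 0 < a i) (hb : ∀ i ∈ Icc 1 ℓ, 0 < b i) {x y : ℕ → ℝ}
    (hxy : ∀ i ∈ Icc 1 ℓ, 0 < x i ∧ 0 < y i) :
    Tstar a b n u + ∑ i ∈ range (n + 1), 2 * obstacleRate (blockRatio a b u i) ^ 2 *
        ∑ j ∈ Icc (u i + 1) (u (i + 1)), netGain (a j) (b j) (x j) (y j) ≤
      ∑ i ∈ Icc 1 ℓ, (x i + y i) := by
  rw [Tstar, ← sum_add_distrib, ← h.2.1, ← h.sum_blocks _ le_rfl]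
  refine sum_le_sum fun i hi => ?_
  have hin : i ≤ n := mem_range_succ_iff.1 hi
  have h_pos := forall_mem_Icc_add_one hxy (u i) (h.le_length (Nat.succ_le_succ hin))
  exact blockTime_add_multiplier_mul_sum_netGain_le (h.sum_block_pos ha hin)
    (h.sum_block_pos hb hin).le (fun j hj => (h_pos j hj).1) fun j hj => (h_pos j hj).2

end AdmissibleDiv

lemma IsCanonicalDiv.blockRatio_succ_le (h : IsCanonicalDiv ℓ a b n u)
    (ha : ∀ i ∈ Icc 1 ℓ, 0 < a i) {i : ℕ} (hi : i < n) :
    blockRatio a b u (i + 1) ≤ blockRatio a b u i := by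
  obtain ⟨h_adm, h_cuts⟩ := h
  obtain ⟨n, rfl⟩ : ∃ n', n = n' + 1 := ⟨n - 1, by omega⟩
  by_contra! hlt
  obtain ⟨k, hk, h_eq⟩ := (h_cuts (u (i + 1))).1 ⟨i + 1, by omega, rfl⟩ n _
    (h_adm.merge ha (by omega) hlt)
  exact dropCut_ne h_adm.strictMonoOn.injOn (by omega) hk h_eq

theorem IsCanonicalDiv.Tstar_le_sum (h : IsCanonicalDiv ℓ a b n u)
    (ha : ∀ i ∈ Icc 1 ℓ, 0 < a i) (hb : ∀ i ∈ Icc 1 ℓ, 0 < b i) {x y : ℕ → ℝ}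
    (hxy : memD ℓ a b x y) : Tstar a b n u ≤ ∑ i ∈ Icc 1 ℓ, (x i + y i) := by
  let μ : ℕ → ℝ := fun i => 2 * obstacleRate (blockRatio a b u i) ^ 2
  let gain : ℕ → ℝ := fun i => ∑ j ∈ Icc (u i + 1) (u (i + 1)), netGain (a j) (b j) (x j) (y j)
  have h_duality : Tstar a b n u + ∑ i ∈ range (n + 1), μ i * gain i ≤
      ∑ i ∈ Icc 1 ℓ, (x i + y i) := h.1.Tstar_add_sum_multiplier_mul_netGain_le ha hb hxy.1
  have h_gain : ∀ k ≤ n + 1, 0 ≤ ∑ i ∈ range k, gain i := by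
    intro k hk
    rw [h.1.sum_blocks _ hk]
    rcases (u k).eq_zero_or_pos with h_zero | h_one
    · simp [h_zero]
    · exact hxy.2.2 (u k) (mem_Icc.2 ⟨h_one, h.1.le_length hk⟩)
  have h_anti : ∀ i < n, μ (i + 1) ≤ μ i := fun i hi =>
    monotoneOn_two_mul_obstacleRate_sq (h.1.blockRatio_pos ha hb hi).le
      (h.1.blockRatio_pos ha hb hi.le).le (h.blockRatio_succ_le ha hi)
  have h_abel : μ n * ∑ i ∈ range (n + 1), gain i ≤ ∑ i ∈ range (n + 1), μ i * gain i :=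
    mul_sum_range_le_sum_range_mul h_anti fun k hk => h_gain k (by omega)
  have h_nonneg : 0 ≤ μ n * ∑ i ∈ range (n + 1), gain i :=
    mul_nonneg (by positivity) (h_gain (n + 1) le_rfl)
  linarith

end Division

/-! ### The optimal point -/

section Optimizer

variable {ℓ n : ℕ} {a b : ℕ → ℝ} {u : ℕ → ℕ} {i j m : ℕ}

/-- The index `i ≤ n` of the block `u i + 1, …, u (i + 1)` containing `j`. -/
def blockIndex (n : ℕ) (u : ℕ → ℕ) (j : ℕ) : ℕ := Nat.findGreatest (fun k => u k < j) n

/-- The `x`-coordinates of the optimal point, with constant rate on each block. -/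
def optX (a b : ℕ → ℝ) (n : ℕ) (u : ℕ → ℕ) (j : ℕ) : ℝ :=
  a j * branchRate (blockRatio a b u (blockIndex n u j))

/-- The `y`-coordinates of the optimal point, with constant rate on each block. -/
def optY (a b : ℕ → ℝ) (n : ℕ) (u : ℕ → ℕ) (j : ℕ) : ℝ :=
  b j * obstacleRate (blockRatio a b u (blockIndex n u j))

lemma blockIndex_eq (hu : MonotoneOn u (Set.Iic (n + 1))) (hi : i ≤ n)
    (hj : j ∈ Icc (u i + 1) (u (i + 1))) : blockIndex n u j = i := by
  rw [mem_Icc] at hj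
  refine Nat.findGreatest_eq_iff.2 ⟨hi, fun _ => hj.1, fun k hik hkn => ?_⟩
  have h_le : u (i + 1) ≤ u k := hu (Set.mem_Iic.2 (by omega)) (Set.mem_Iic.2 (by omega)) hik
  omega

lemma exists_mem_block (hj : j ∈ Icc (u 0 + 1) (u (n + 1))) :
    ∃ i ≤ n, j ∈ Icc (u i + 1) (u (i + 1)) := by
  induction n with
  | zero => exact ⟨0, le_rfl, hj⟩
  | succ n ih =>
    rw [mem_Icc] at hj
    rcases le_or_gt j (u (n + 1)) with h_le | h_gt
    · obtain ⟨i, hi, hij⟩ := ih (mem_Icc.2 ⟨hj.1, h_le⟩)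
      exact ⟨i, by omega, hij⟩
    · exact ⟨n + 1, le_rfl, mem_Icc.2 ⟨h_gt, hj.2⟩⟩

namespace AdmissibleDiv

lemma sum_opt_eq_Tstar (h : AdmissibleDiv ℓ a b n u) (ha : ∀ i ∈ Icc 1 ℓ, 0 < a i)
    (hb : ∀ i ∈ Icc 1 ℓ, 0 < b i) :
    ∑ j ∈ Icc 1 ℓ, (optX a b n u j + optY a b n u j) = Tstar a b n u := by
  rw [Tstar, ← h.2.1, ← h.sum_blocks _ le_rfl]
  refine sum_congr rfl fun i hi => ?_
  have hin : i ≤ n := mem_range_succ_iff.1 hi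
  rw [blockTime_eq (h.sum_block_pos ha hin) (h.sum_block_pos hb hin).le, sum_mul, sum_mul,
    ← sum_add_distrib]
  refine sum_congr rfl fun j hj => ?_
  rw [optX, optY, blockIndex_eq h.strictMonoOn.monotoneOn hin hj]
  rfl

lemma sum_netGain_opt_of_le (h : AdmissibleDiv ℓ a b n u) (ha : ∀ i ∈ Icc 1 ℓ, 0 < a i)
    (hb : ∀ i ∈ Icc 1 ℓ, 0 < b i) (hi : i ≤ n) (hm : m ≤ u (i + 1)) :
    ∑ j ∈ Icc (u i + 1) m, netGain (a j) (b j) (optX a b n u j) (optY a b n u j) =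
      ((∑ j ∈ Icc (u i + 1) m, a j) * blockRatio a b u i - ∑ j ∈ Icc (u i + 1) m, b j) /
        (2 * obstacleRate (blockRatio a b u i)) := by
  rw [← sum_netGain_mul_rates _ a b (h.blockRatio_pos ha hb hi).le]
  refine sum_congr rfl fun j hj => ?_
  rw [optX, optY, blockIndex_eq h.strictMonoOn.monotoneOn hi (Icc_subset_Icc_right hm hj)]

lemma sum_netGain_opt_cut (h : AdmissibleDiv ℓ a b n u) (ha : ∀ i ∈ Icc 1 ℓ, 0 < a i)
    (hb : ∀ i ∈ Icc 1 ℓ, 0 < b i) {k : ℕ} (hk : k ≤ n + 1) :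
    ∑ j ∈ Icc 1 (u k), netGain (a j) (b j) (optX a b n u j) (optY a b n u j) = 0 := by
  rw [← h.sum_blocks _ hk]
  refine sum_eq_zero fun i hi => ?_
  have hin : i ≤ n := Nat.lt_succ_iff.1 ((mem_range.1 hi).trans_le hk)
  rw [h.sum_netGain_opt_of_le ha hb hin le_rfl, blockRatio, ratioBA,
    mul_div_cancel₀ _ (h.sum_block_pos ha hin).ne', sub_self, zero_div]

lemma sum_netGain_opt_nonneg (h : AdmissibleDiv ℓ a b n u) (ha : ∀ i ∈ Icc 1 ℓ, 0 < a i)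
    (hb : ∀ i ∈ Icc 1 ℓ, 0 < b i) (hm : m ∈ Icc 1 ℓ) :
    0 ≤ ∑ j ∈ Icc 1 m, netGain (a j) (b j) (optX a b n u j) (optY a b n u j) := by
  obtain ⟨i, hi, him⟩ : ∃ i ≤ n, m ∈ Icc (u i + 1) (u (i + 1)) :=
    exists_mem_block (by rwa [h.1, h.2.1])
  obtain ⟨h_lt, h_le⟩ := mem_Icc.1 him
  have hA := sum_Icc_add_one_pos ha h_lt (mem_Icc.1 hm).2
  have h_ratio : ratioBA a b (u i + 1) m ≤ blockRatio a b u i :=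
    IsAdmissibleBlock.ratioBA_le (h.2.2.2 i hi) ha h_lt h_le (h.le_length (Nat.succ_le_succ hi))
  rw [ratioBA, div_le_iff₀' hA] at h_ratio
  rw [← sum_Icc_add_one_consecutive _ (u i).zero_le (Nat.le_of_lt h_lt),
    zero_add, h.sum_netGain_opt_cut ha hb (by omega), zero_add,
    h.sum_netGain_opt_of_le ha hb hi h_le]
  exact div_nonneg (sub_nonneg.2 h_ratio) (mul_pos two_pos (obstacleRate_pos _)).le

lemma memDhat_opt (h : AdmissibleDiv ℓ a b n u) (ha : ∀ i ∈ Icc 1 ℓ, 0 < a i)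
    (hb : ∀ i ∈ Icc 1 ℓ, 0 < b i) (hT : Tstar a b n u ≤ 1) :
    memDhat ℓ a b (optX a b n u) (optY a b n u) :=
  ⟨⟨fun i hi => ⟨mul_pos (ha i hi) (branchRate_pos _), mul_pos (hb i hi) (obstacleRate_pos _)⟩,
    (h.sum_opt_eq_Tstar ha hb).trans_le hT, fun _ hm => h.sum_netGain_opt_nonneg ha hb hm⟩,
    by simpa only [h.2.1, netGain] using h.sum_netGain_opt_cut ha hb le_rfl⟩

end AdmissibleDiv

end Optimizer

lemma Fobj_eq_sq_of_memDhat {ℓ : ℕ} {a b x y : ℕ → ℝ} (h : memDhat ℓ a b x y) :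
    Fobj ℓ a b x y = (1 - ∑ i ∈ Icc 1 ℓ, (x i + y i)) ^ 2 := by
  have h_factor : ∑ i ∈ Icc 1 ℓ, (x i + y i) -
      ∑ i ∈ Icc 1 ℓ, (y i + a i ^ 2 / (2 * x i) + b i ^ 2 / (2 * y i)) = 0 := by
    rw [← sum_sub_distrib, ← h.2]
    exact sum_congr rfl fun i _ => by ring
  rw [Fobj, ← sub_eq_zero.1 h_factor, sq]

/-- If `D̂` is nonempty, the maximum of `F` over `D̂` equals `(h*)²/2` with
`h* = √2 (1 − T*)`, where `T*` is the total optimal time of the canonical admissible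
division into blocks. -/
theorem max_over_Dhat_general (ℓ : ℕ) (hℓ : 1 ≤ ℓ) (a b : ℕ → ℝ)
    (ha : ∀ i ∈ Finset.Icc 1 ℓ, 0 < a i) (hb : ∀ i ∈ Finset.Icc 1 ℓ, 0 < b i)
    (nstar : ℕ) (ustar : ℕ → ℕ) (hcanon : IsCanonicalDiv ℓ a b nstar ustar)
    (hDhat : ∃ x y : ℕ → ℝ, memDhat ℓ a b x y) :
    IsGreatest {v : ℝ | ∃ x y : ℕ → ℝ, memDhat ℓ a b x y ∧ Fobj ℓ a b x y = v}
      ((Real.sqrt 2 * (1 - Tstar a b nstar ustar)) ^ 2 / 2) := by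
  have h_bound : ∀ x y, memDhat ℓ a b x y →
      Tstar a b nstar ustar ≤ ∑ i ∈ Icc 1 ℓ, (x i + y i) :=
    fun _ _ hxy => hcanon.Tstar_le_sum ha hb hxy.1
  have h_opt : memDhat ℓ a b (optX a b nstar ustar) (optY a b nstar ustar) := by
    obtain ⟨x, y, hxy⟩ := hDhat
    exact hcanon.1.memDhat_opt ha hb ((h_bound x y hxy).trans hxy.1.2.1)
  have h_value : (√2 * (1 - Tstar a b nstar ustar)) ^ 2 / 2 = (1 - Tstar a b nstar ustar) ^ 2 := by
    rw [mul_pow, Real.sq_sqrt two_pos.le, mul_div_cancel_left₀ _ two_ne_zero]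
  rw [h_value]
  refine ⟨⟨_, _, h_opt, ?_⟩, ?_⟩
  · rw [Fobj_eq_sq_of_memDhat h_opt, hcanon.1.sum_opt_eq_Tstar ha hb]
  · rintro v ⟨x, y, hxy, rfl⟩
    rw [Fobj_eq_sq_of_memDhat hxy]
    exact pow_le_pow_left₀ (sub_nonneg.2 hxy.1.2.1) (sub_le_sub_left (h_bound x y hxy) 1) 2
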